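/- Let q ≡ 3 (mod 4) and p ≡ 1 (mod 4) be primes. Then 4 divides the class number h(-qp) of Q(√(-qp)) if and only if (-q/p) = 1. -/

import Mathlib

open NumberField Module

/-!
Let `P` be the prime above `p` in `ℚ(√(-qp))`, so that `P ^ 2 = (p)`. An ideal class of order
dividing two contains an ideal whose square is generated by a divisor of the discriminant `-qp`, so
it is trivial or the class of `P`, and the latter is not trivial because `p` is not a norm. The
2-part of the class group is therefore cyclic, and four divides the class number exactly when the
class of `P` is a square. Taking norms, and Hilbert's theorem 90 for ideals in the other direction,
turn this condition into the solvability of `z ^ 2 = p * x ^ 2 + q * y ^ 2` in integers with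
`z ≠ 0`. By Legendre's theorem, a pigeonhole argument combined with quadratic reciprocity, the conic
has such a point if and only if `q` is a square modulo `p`; as `p ≡ 1 [MOD 4]`, so is then `-q`.
-/

section PrimaryCyclic

variable {G : Type*} [CommGroup G] [Finite G] {P : G}

theorem four_dvd_card_iff_isSquare (hP : P ≠ 1) (hP2 : P ^ 2 = 1)
    (h2 : ∀ c : G, c ^ 2 = 1 → c = 1 ∨ c = P) : 4 ∣ Nat.card G ↔ IsSquare P := by
  have : Fact (Nat.Prime 2) := ⟨Nat.prime_two⟩
  rw [isSquare_iff_exists_sq]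
  constructor
  · intro h4
    let sq : G →* G := powMonoidHom 2
    have hker : Nat.card sq.ker = 2 := Nat.card_eq_two_iff.mpr
      ⟨1, ⟨P, hP2⟩, fun h ↦ hP (congrArg Subtype.val h).symm, by
        ext ⟨c, hc⟩
        simpa [Subtype.ext_iff] using h2 c hc⟩
    have hcard : 2 * Nat.card sq.range = Nat.card G := by
      rw [← hker, ← Subgroup.index_ker, Subgroup.card_mul_index]
    obtain ⟨⟨g, hg⟩, hord⟩ := exists_prime_orderOf_dvd_card' (G := sq.range) 2 (by omega)
    rw [Subgroup.orderOf_mk, orderOf_eq_prime_iff] at hord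
    obtain ⟨c, rfl⟩ := hg
    exact ⟨c, ((h2 _ hord.1).resolve_left hord.2).symm⟩
  · rintro ⟨c, rfl⟩
    have : orderOf c = 2 ^ (1 + 1) := orderOf_eq_prime_pow hP (by rwa [pow_succ, pow_mul])
    exact (this ▸ orderOf_dvd_natCard c : 2 ^ (1 + 1) ∣ Nat.card G)

end PrimaryCyclic

section Conic

theorem eq_zero_of_sq_eq_of_legendreSym_eq_neg_one {p : ℕ} [Fact p.Prime] {a : ℤ}
    (ha : legendreSym p a = -1) {x y z : ℤ} (h : z ^ 2 = a * y ^ 2 + p * x ^ 2) : z = 0 := by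
  have hp : Prime (p : ℤ) := Nat.prime_iff_prime_int.mp Fact.out
  have hdvd (n : ℕ) : ∀ x y z : ℤ, z ^ 2 = a * y ^ 2 + p * x ^ 2 → (p : ℤ) ^ n ∣ z := by
    induction n with
    | zero => simp
    | succ n ih =>
      intro x y z h
      obtain ⟨⟨z, rfl⟩, ⟨y, rfl⟩⟩ := legendreSym.prime_dvd_of_eq_neg_one ha
        (x := z) (y := y) ⟨x ^ 2, by linear_combination h⟩
      have hx : (p : ℤ) ∣ x ^ 2 :=
        ⟨z ^ 2 - a * y ^ 2, mul_left_cancel₀ hp.ne_zero (by linear_combination -h)⟩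
      obtain ⟨x, rfl⟩ := hp.dvd_of_dvd_pow hx
      rw [pow_succ']
      exact mul_dvd_mul_left _
        (ih x y z (mul_left_cancel₀ (pow_ne_zero 2 hp.ne_zero) (by linear_combination h)))
  by_contra hz
  obtain ⟨n, hn⟩ := FiniteMultiplicity.of_prime_left hp hz
  exact hn (hdvd _ x y z h)

theorem exists_small_dvd_sq_sub_sub {a b : ℕ} (ha0 : 0 < a) (hb0 : 0 < b) (hab : a.Coprime b)
    (ha : IsSquare (a : ZMod b)) (hb : IsSquare (b : ZMod a)) :
    ∃ x y z : ℤ, (x ≠ 0 ∨ y ≠ 0 ∨ z ≠ 0) ∧ x ^ 2 ≤ b ∧ y ^ 2 ≤ a ∧ z ^ 2 ≤ a * b ∧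
      (a * b : ℤ) ∣ z ^ 2 - a * x ^ 2 - b * y ^ 2 := by
  have := NeZero.mk ha0.ne'
  have := NeZero.mk hb0.ne'
  obtain ⟨t, ht⟩ := ha
  obtain ⟨r, hr⟩ := hb
  let box (n : ℕ) := Finset.range (n.sqrt + 1)
  let f (v : ℕ × ℕ × ℕ) : ZMod a × ZMod b := (v.2.2 - r * v.2.1, v.2.2 - t * v.1)
  have hcard : (Finset.univ : Finset (ZMod a × ZMod b)).card <
      (box b ×ˢ box a ×ˢ box (a * b)).card := by
    simp only [Finset.card_univ, Fintype.card_prod, ZMod.card, Finset.card_product, box,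
      Finset.card_range]
    refine lt_of_pow_lt_pow_left₀ 2 (Nat.zero_le _) ?_
    calc (a * b) ^ 2 = b * (a * (a * b)) := by ring
      _ < (b.sqrt + 1) ^ 2 * ((a.sqrt + 1) ^ 2 * ((a * b).sqrt + 1) ^ 2) := by
        gcongr <;> exact Nat.lt_succ_sqrt' _
      _ = _ := by ring
  obtain ⟨⟨x, y, z⟩, hv, ⟨x', y', z'⟩, hv', hne, heq⟩ :=
    Finset.exists_ne_map_eq_of_card_lt_of_maps_to hcard (f := f) fun _ _ ↦ Finset.mem_univ _
  have hsmall {n m k : ℕ} (hm : m ∈ box n) (hk : k ∈ box n) : ((m : ℤ) - k) ^ 2 ≤ n := by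
    have hn : (n.sqrt : ℤ) ^ 2 ≤ n := mod_cast Nat.sqrt_le' n
    simp only [box, Finset.mem_range] at hm hk
    refine (sq_le_sq.mpr ?_).trans hn
    grind
  simp only [Finset.mem_product] at hv hv'
  simp only [f, Prod.mk.injEq] at heq
  refine ⟨x - x', y - y', z - z', by grind, hsmall hv.1 hv'.1, hsmall hv.2.1 hv'.2.1,
    mod_cast hsmall hv.2.2 hv'.2.2, (Nat.isCoprime_iff_coprime.mpr hab).mul_dvd ?_ ?_⟩
  · rw [← ZMod.intCast_zmod_eq_zero_iff_dvd]
    have hz : (z - z' : ZMod a) = r * (y - y') := by linear_combination heq.1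
    push_cast
    rw [hz, hr, ZMod.natCast_self]
    ring
  · rw [← ZMod.intCast_zmod_eq_zero_iff_dvd]
    have hz : (z - z' : ZMod b) = t * (x - x') := by linear_combination heq.2
    push_cast
    rw [hz, ht, ZMod.natCast_self]
    ring

theorem exists_sq_eq_mul_sq_add_mul_sq {a b : ℕ} (ha : ¬ IsSquare a) (hb : ¬ IsSquare b)
    (hab : a.Coprime b) (hab' : IsSquare (a : ZMod b)) (hba : IsSquare (b : ZMod a)) :
    ∃ x y z : ℤ, z ≠ 0 ∧ z ^ 2 = a * x ^ 2 + b * y ^ 2 := by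
  have hsq {n : ℕ} {u : ℤ} (hn : ¬ IsSquare n) (hu : u ^ 2 ≤ n) : u ^ 2 < n :=
    hu.lt_of_ne fun h ↦ hn ⟨u.natAbs, by zify; rw [← h, ← sq, sq_abs]⟩
  have hmul : ¬ IsSquare (a * b) := by
    rintro ⟨c, hc⟩
    obtain ⟨d, hd⟩ := exists_eq_pow_of_mul_eq_pow (Nat.isUnit_iff.mpr hab) (hc.trans (sq c).symm)
    exact ha ⟨d, hd.trans (sq d)⟩
  have ha0 : 0 < a := Nat.pos_of_ne_zero fun h ↦ ha ⟨0, h⟩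
  have hb0 : 0 < b := Nat.pos_of_ne_zero fun h ↦ hb ⟨0, h⟩
  obtain ⟨x, y, z, hne, hx, hy, hz, m, hm⟩ := exists_small_dvd_sq_sub_sub ha0 hb0 hab hab' hba
  replace hx := hsq hb hx
  replace hy := hsq ha hy
  replace hz := hsq hmul (mod_cast hz)
  push_cast at hz
  have hab0 : (0 : ℤ) < a * b := by positivity
  have hax : (a : ℤ) * x ^ 2 < a * b := by gcongr
  have hby : (b : ℤ) * y ^ 2 < a * b := by rw [mul_comm (a : ℤ)]; gcongr
  have hm1 : m < 1 := by
    refine lt_of_mul_lt_mul_left (a := (a * b : ℤ)) ?_ hab0.le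
    nlinarith [sq_nonneg x, sq_nonneg y]
  have hm2 : -2 < m := by
    refine lt_of_mul_lt_mul_left (a := (a * b : ℤ)) ?_ hab0.le
    linarith [sq_nonneg z]
  obtain rfl | rfl : m = 0 ∨ m = -1 := by omega
  · refine ⟨x, y, z, ?_, by linarith⟩
    rintro rfl
    have hx0 : x ^ 2 = 0 := by nlinarith [sq_nonneg x, sq_nonneg y]
    have hy0 : y ^ 2 = 0 := by nlinarith [sq_nonneg x, sq_nonneg y]
    simp_all
  -- `(ax² + by²)(z² + ab) = a(xz + by)² + b(yz - ax)²`
  · exact ⟨x * z + b * y, y * z - a * x, z ^ 2 + a * b, by positivity,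
      by linear_combination (z ^ 2 + a * b : ℤ) * hm⟩

theorem exists_sq_eq_iff_legendreSym_eq_one {p q : ℕ} [Fact p.Prime] (hq : q.Prime)
    (hne : p ≠ q) (hp4 : p % 4 = 1) (hq2 : q ≠ 2) :
    (∃ x y z : ℤ, z ≠ 0 ∧ z ^ 2 = p * x ^ 2 + q * y ^ 2) ↔ legendreSym p q = 1 := by
  have hp : p.Prime := Fact.out
  have := Fact.mk hq
  have hcop : p.Coprime q := (Nat.coprime_primes hp hq).mpr hne
  have hq0 : ((q : ℤ) : ZMod p) ≠ 0 := by
    simpa [ZMod.natCast_eq_zero_iff, Nat.prime_dvd_prime_iff_eq hp hq] using hne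
  constructor
  · rintro ⟨x, y, z, hz, h⟩
    refine (legendreSym.eq_one_or_neg_one p hq0).resolve_right fun hneg ↦ hz ?_
    exact eq_zero_of_sq_eq_of_legendreSym_eq_neg_one hneg (h.trans (add_comm _ _))
  · intro h
    have hqp : IsSquare (q : ZMod p) := by simpa using (legendreSym.eq_one_iff p hq0).mp h
    exact exists_sq_eq_mul_sq_add_mul_sq hp.prime.not_isSquare hq.prime.not_isSquare hcop
      ((ZMod.exists_sq_eq_prime_iff_of_mod_four_eq_one hp4 hq2).mp hqp) hqp

end Conic

section Ideals

theorem span_pair_sq_eq_span_singleton {R : Type*} [CommRing R] {r r' s : R} (hs : s ^ 2 = r * r')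
    (hr : IsCoprime r r') : Ideal.span {r, s} ^ 2 = Ideal.span {r} := by
  obtain ⟨u, v, huv⟩ := hr
  rw [sq, Ideal.span_pair_mul_span_pair]
  apply le_antisymm
  · rw [Ideal.span_le]
    rintro _ (rfl | rfl | rfl | rfl) <;> rw [SetLike.mem_coe, Ideal.mem_span_singleton]
    · exact dvd_mul_right r r
    · exact dvd_mul_right r s
    · exact dvd_mul_left r s
    · exact ⟨r', by rw [← sq, hs]⟩
  · rw [Ideal.span_singleton_le_iff_mem]
    have hmem : u * (r * r) + v * (s * s) ∈ Ideal.span {r * r, r * s, s * r, s * s} :=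
      add_mem (Ideal.mul_mem_left _ _ (Ideal.subset_span (by simp)))
        (Ideal.mul_mem_left _ _ (Ideal.subset_span (by simp)))
    convert hmem using 1
    linear_combination -r * huv - v * hs

theorem dvd_of_sq_sub_mul_add_eq_zero {R : Type*} [CommRing R] [IsDomain R] [IsIntegrallyClosed R]
    {g t n z : R} (ht : g ∣ t) (hn : g ^ 2 ∣ n) (hz : z ^ 2 - t * z + n = 0) : g ∣ z := by
  obtain ⟨t, rfl⟩ := ht
  obtain ⟨n, rfl⟩ := hn
  obtain rfl | hg := eq_or_ne g 0
  · simpa using hz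
  let φ := algebraMap R (FractionRing R)
  have hφ : φ g ≠ 0 := by simpa [φ] using hg
  have hint : IsIntegral R (φ z / φ g) := by
    refine ⟨.X ^ 2 - .C t * .X + .C n, by monicity!, ?_⟩
    have := congrArg φ hz
    simp only [map_add, map_sub, map_mul, map_pow, map_zero] at this
    simp only [Polynomial.eval₂_add, Polynomial.eval₂_sub, Polynomial.eval₂_mul,
      Polynomial.eval₂_pow, Polynomial.eval₂_X, Polynomial.eval₂_C]
    field_simp
    linear_combination this
  obtain ⟨y, hy⟩ := IsIntegrallyClosed.algebraMap_eq_of_integral hint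
  exact ⟨y, IsFractionRing.injective R (FractionRing R) (by
    rw [map_mul, hy]; exact (mul_div_cancel₀ _ hφ).symm)⟩

end Ideals

section Quadratic

open QuadraticAlgebra

theorem star_algebraMap_quadraticAlgebra {S R : Type*} [CommSemiring S] [CommRing R] [Algebra S R]
    {a b : R} (s : S) : star (algebraMap S (QuadraticAlgebra R a b) s) = algebraMap S _ s := by
  have : algebraMap S (QuadraticAlgebra R a b) s = ⟨algebraMap S R s, 0⟩ := rfl
  simp [this]

variable {R : Type*} [CommRing R] [IsDomain R] {a b : R}

theorem associated_norm_of_span_singleton_mul_map_eq [IsDomain (QuadraticAlgebra R a b)]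
    {x : QuadraticAlgebra R a b} {g : R}
    (h : Ideal.span {x} * (Ideal.span {x}).map (starRingEnd _) =
      Ideal.span {algebraMap R (QuadraticAlgebra R a b) g}) : Associated (norm x) g := by
  rw [Ideal.map_span, Set.image_singleton, Ideal.span_singleton_mul_span_singleton,
    starRingEnd_apply, ← algebraMap_norm_eq_mul_star,
    Ideal.span_singleton_eq_span_singleton] at h
  exact associated_of_dvd_dvd (algebraMap_dvd_iff_dvd.mp h.dvd) (algebraMap_dvd_iff_dvd.mp h.dvd')

variable [IsPrincipalIdealRing R] [IsDedekindDomain (QuadraticAlgebra R a b)]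

theorem exists_mul_map_star_eq_span_singleton (I : Ideal (QuadraticAlgebra R a b)) :
    ∃ g : R, I * I.map (starRingEnd _) = Ideal.span {algebraMap R (QuadraticAlgebra R a b) g} := by
  obtain ⟨α, β, rfl⟩ : ∃ α β, I = Ideal.span {α, β} := by
    obtain rfl | hI := eq_or_ne I ⊥
    · exact ⟨0, 0, by simp⟩
    · obtain ⟨α, hα, hα0⟩ := Submodule.exists_mem_ne_zero_of_ne_bot hI
      exact ⟨α, IsDedekindDomain.exists_eq_span_pair hα hα0⟩
  let φ := algebraMap R (QuadraticAlgebra R a b)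
  obtain ⟨g, hg⟩ := IsPrincipalIdealRing.principal
    (Ideal.span {norm α, trace (α * star β), norm β})
  rw [Ideal.submodule_span_eq] at hg
  have hdvd {r : R} (hr : r ∈ ({norm α, trace (α * star β), norm β} : Set R)) : g ∣ r :=
    Ideal.mem_span_singleton.mp (hg ▸ Ideal.subset_span hr)
  -- Gauss's content argument: `z / g` has integral trace and norm, hence is integral.
  have hcross {z : QuadraticAlgebra R a b} (ht : g ∣ trace z) (hn : norm z = norm α * norm β) :
      φ g ∣ z := by
    refine dvd_of_sq_sub_mul_add_eq_zero (map_dvd φ ht) (n := φ (norm z)) ?_ ?_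
    · rw [← map_pow]
      exact map_dvd φ (by rw [hn, sq]; exact mul_dvd_mul (hdvd (by simp)) (hdvd (by simp)))
    · rw [← Algebra.smul_def]
      exact sq_sub_trace_smul_add_norm_eq_zero z
  refine ⟨g, ?_⟩
  rw [Ideal.map_span, Set.image_pair, Ideal.span_pair_mul_span_pair]
  simp only [starRingEnd_apply, ← algebraMap_norm_eq_mul_star]
  apply le_antisymm
  · rw [Ideal.span_le]
    rintro _ (rfl | rfl | rfl | rfl) <;> rw [SetLike.mem_coe, Ideal.mem_span_singleton]
    · exact map_dvd φ (hdvd (by simp))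
    · exact hcross (hdvd (by simp)) (by simp)
    · exact hcross (by rw [← trace_star, star_mul, star_star]; exact hdvd (by simp))
        (by simp [mul_comm])
    · exact map_dvd φ (hdvd (by simp))
  · rw [← Set.image_singleton, ← Ideal.map_span, ← hg, Ideal.map_span, Ideal.span_le]
    rintro _ ⟨_, rfl | rfl | rfl, rfl⟩
    · exact Ideal.subset_span (by simp)
    · rw [algebraMap_trace_eq_add_star, star_mul, star_star]
      exact add_mem (Ideal.subset_span (by simp)) (Ideal.subset_span (by simp))
    · exact Ideal.subset_span (by simp)

end Quadratic

section Torsion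

open QuadraticAlgebra

theorem four_mul_norm_eq {R : Type*} [CommRing R] {a b : R} (x : QuadraticAlgebra R a b) :
    4 * norm x = (2 * x.re + b * x.im) ^ 2 - (b ^ 2 + 4 * a) * x.im ^ 2 := by
  rw [norm_def]
  ring

theorem algebraMap_dvd_of_dvd_sq {R : Type*} [CommRing R] {a b l : R} (hl : Prime l)
    (hD : ¬ l ∣ b ^ 2 + 4 * a) {x : QuadraticAlgebra R a b}
    (h : algebraMap R (QuadraticAlgebra R a b) l ∣ x ^ 2) :
    algebraMap R (QuadraticAlgebra R a b) l ∣ x := by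
  rw [algebraMap_dvd_iff, sq, re_mul, im_mul] at h
  rw [algebraMap_dvd_iff]
  obtain ⟨hre, him⟩ := h
  have hmul : l ∣ x.im * (2 * x.re + b * x.im) := by
    convert him using 1
    ring
  have hdisc : l ∣ (b ^ 2 + 4 * a) * x.im ^ 3 := by
    convert (hre.mul_left (4 * x.im)).sub (hmul.mul_left (2 * x.re - b * x.im)) using 1
    ring
  have hv : l ∣ x.im := hl.dvd_of_dvd_pow ((hl.dvd_or_dvd hdisc).resolve_left hD)
  rw [dvd_add_left (hv.mul_left _), ← sq] at hre
  exact ⟨hl.dvd_of_dvd_pow hre, hv⟩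

variable {a b : ℤ}

theorem norm_nonneg_of_disc_neg (hD : b ^ 2 + 4 * a < 0) (x : QuadraticAlgebra ℤ a b) :
    0 ≤ norm x := by
  nlinarith [four_mul_norm_eq x, sq_nonneg (2 * x.re + b * x.im), sq_nonneg x.im]

theorem norm_eq_of_associated (hD : b ^ 2 + 4 * a < 0) {x : QuadraticAlgebra ℤ a b} {n : ℤ}
    (hn : 0 ≤ n) (h : Associated (norm x) n) : norm x = n :=
  Int.eq_of_associated_of_nonneg h (norm_nonneg_of_disc_neg hD x) hn

open nonZeroDivisors

theorem dvd_disc_of_sq_eq_span_natCast {m : ℕ} (hm : Squarefree m)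
    {B : Ideal (QuadraticAlgebra ℤ a b)} (hB : B ^ 2 = Ideal.span {(m : QuadraticAlgebra ℤ a b)}) :
    (m : ℤ) ∣ b ^ 2 + 4 * a := by
  obtain hD | hD := eq_or_ne (b ^ 2 + 4 * a) 0
  · simp [hD]
  rw [← Int.dvd_natAbs, Int.natCast_dvd_natCast]
  refine ((hm.isRadical).dvd_radical hm.ne_zero).trans ?_
  rw [Nat.radical_dvd_iff (Int.natAbs_ne_zero.mpr hD)]
  intro l hlm
  obtain ⟨hl, hlm, -⟩ := Nat.mem_primeFactors.mp hlm
  rw [Nat.mem_primeFactors_of_ne_zero (Int.natAbs_ne_zero.mpr hD)]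
  refine ⟨hl, ?_⟩
  rw [← Int.natCast_dvd]
  by_contra hlD
  have hBl : B ≤ Ideal.span {(l : QuadraticAlgebra ℤ a b)} := fun x hx ↦ by
    rw [Ideal.mem_span_singleton]
    have hmx : (m : QuadraticAlgebra ℤ a b) ∣ x ^ 2 := by
      rw [← Ideal.mem_span_singleton, ← hB]
      exact Ideal.pow_mem_pow hx 2
    simpa using algebraMap_dvd_of_dvd_sq (Nat.prime_iff_prime_int.mp hl) hlD
      (x := x) (by simpa using (Nat.cast_dvd_cast hlm).trans hmx)
  have hlm2 : algebraMap ℤ (QuadraticAlgebra ℤ a b) (l ^ 2) ∣ algebraMap ℤ _ m := by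
    rw [← Ideal.span_singleton_le_span_singleton]
    simpa [← Ideal.span_singleton_pow, ← hB] using Ideal.pow_right_mono hBl 2
  have := algebraMap_dvd_iff_dvd.mp hlm2
  exact hl.one_lt.ne' (Nat.isUnit_iff.mp (hm l (by rw [← sq]; exact_mod_cast this)))

variable [IsDedekindDomain (QuadraticAlgebra ℤ a b)]

theorem exists_squarefree_sq_eq_span_natCast {m : ℕ} (hm : m ≠ 0)
    {B : (Ideal (QuadraticAlgebra ℤ a b))⁰}
    (hB : (B : Ideal _) ^ 2 = Ideal.span {(m : QuadraticAlgebra ℤ a b)}) :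
    ∃ (n : ℕ) (C : (Ideal (QuadraticAlgebra ℤ a b))⁰), Squarefree n ∧
      (C : Ideal _) ^ 2 = Ideal.span {(n : QuadraticAlgebra ℤ a b)} ∧
      ClassGroup.mk0 C = ClassGroup.mk0 B := by
  obtain ⟨n, r, rfl, hn⟩ := Nat.sq_mul_squarefree m
  have hr : (r : QuadraticAlgebra ℤ a b) ≠ 0 := by
    rintro h
    simp_all
  have hr' : Ideal.span {(r : QuadraticAlgebra ℤ a b)} ≠ ⊥ := by simpa using hr
  rw [Nat.cast_mul, Nat.cast_pow, ← Ideal.span_singleton_mul_span_singleton,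
    ← Ideal.span_singleton_pow] at hB
  obtain ⟨C, hC⟩ : Ideal.span {(r : QuadraticAlgebra ℤ a b)} ∣ B :=
    (UniqueFactorizationMonoid.pow_dvd_pow_iff_dvd two_ne_zero).mp ⟨_, hB⟩
  have hC0 : C ∈ (Ideal (QuadraticAlgebra ℤ a b))⁰ :=
    (mul_mem_nonZeroDivisors.mp (hC ▸ B.2)).2
  refine ⟨n, ⟨C, hC0⟩, hn, ?_, ClassGroup.mk0_eq_mk0_iff.mpr ⟨r, 1, hr, one_ne_zero, ?_⟩⟩
  · rw [hC, mul_pow] at hB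
    exact mul_left_cancel₀ (pow_ne_zero 2 hr') hB
  · simpa using hC.symm

theorem exists_sq_eq_span_natCast_of_sq_eq_span_singleton (hD : b ^ 2 + 4 * a < 0)
    {A : Ideal (QuadraticAlgebra ℤ a b)} {x : QuadraticAlgebra ℤ a b} (hx0 : x ≠ 0)
    (hx : A ^ 2 = Ideal.span {x}) :
    ∃ m : ℕ, m ≠ 0 ∧ ∃ B, B ^ 2 = Ideal.span {(m : QuadraticAlgebra ℤ a b)} ∧
      ∃ y ≠ 0, A * B = Ideal.span {y} := by
  let φ := algebraMap ℤ (QuadraticAlgebra ℤ a b)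
  suffices ∃ m : ℤ, m ≠ 0 ∧ ∃ B, B ^ 2 = Ideal.span {φ m} ∧ ∃ y ≠ 0, A * B = Ideal.span {y} by
    obtain ⟨m, hm, B, hB, hAB⟩ := this
    refine ⟨m.natAbs, by simpa, B, ?_, hAB⟩
    rw [hB, Ideal.span_singleton_eq_span_singleton]
    simpa using (Int.associated_natAbs m).map φ
  obtain ⟨g, hg⟩ := exists_mul_map_star_eq_span_singleton A
  have hnorm : norm x = g ^ 2 := by
    refine norm_eq_of_associated hD (sq_nonneg g) (associated_norm_of_span_singleton_mul_map_eq ?_)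
    rw [← hx, Ideal.map_pow, ← mul_pow, hg, Ideal.span_singleton_pow, map_pow]
  -- When `norm x = g ^ 2`, the element `x + g` is, up to a rational factor, a square root of `x`.
  have hy : (x + φ g) ^ 2 = φ (trace x + 2 * g) * x := by
    have := sq_sub_trace_smul_add_norm_eq_zero x
    rw [hnorm, map_pow, Algebra.smul_def] at this
    rw [map_add, map_mul, map_ofNat]
    linear_combination this
  obtain hxg | hxg := eq_or_ne (x + φ g) 0
  · refine ⟨g, ?_, A, ?_, x, hx0, by rw [← sq, hx]⟩
    · rintro rfl
      simp_all
    · rw [hx, eq_neg_of_add_eq_zero_left hxg, Ideal.span_singleton_neg]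
  · obtain ⟨B, hB⟩ : A ∣ Ideal.span {x + φ g} := by
      refine (UniqueFactorizationMonoid.pow_dvd_pow_iff_dvd two_ne_zero).mp ?_
      rw [hx, Ideal.span_singleton_pow, hy, ← Ideal.span_singleton_mul_span_singleton]
      exact dvd_mul_left _ _
    refine ⟨trace x + 2 * g, fun h ↦ hxg ?_, B, ?_, x + φ g, hxg, hB.symm⟩
    · rwa [h, map_zero, zero_mul, sq_eq_zero_iff] at hy
    · have hx0' : Ideal.span {x} ≠ ⊥ := by simpa
      apply mul_left_cancel₀ hx0'
      rw [Ideal.span_singleton_mul_span_singleton, mul_comm x, ← hy, ← Ideal.span_singleton_pow,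
        hB, ← hx, mul_pow]

theorem exists_dvd_disc_sq_eq_span_natCast_of_sq_eq_one (hD : b ^ 2 + 4 * a < 0)
    {c : ClassGroup (QuadraticAlgebra ℤ a b)} (hc : c ^ 2 = 1) :
    ∃ (m : ℕ) (B : (Ideal (QuadraticAlgebra ℤ a b))⁰), (m : ℤ) ∣ b ^ 2 + 4 * a ∧
      (B : Ideal _) ^ 2 = Ideal.span {(m : QuadraticAlgebra ℤ a b)} ∧
      ClassGroup.mk0 B = c := by
  obtain ⟨A, rfl⟩ := ClassGroup.mk0_surjective c
  rw [sq, mul_eq_one_iff_eq_inv] at hc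
  obtain ⟨x, hx0, hx⟩ := ClassGroup.mk0_eq_mk0_inv_iff.mp hc
  obtain ⟨m, hm, B, hB, y, hy0, hy⟩ :=
    exists_sq_eq_span_natCast_of_sq_eq_span_singleton hD hx0 ((sq _).trans hx)
  have hB0 : B ∈ (Ideal (QuadraticAlgebra ℤ a b))⁰ := by
    refine mem_nonZeroDivisors_of_ne_zero fun h ↦ hy0 ?_
    simpa [h] using hy.symm
  obtain ⟨n, C, hn, hC, hCB⟩ := exists_squarefree_sq_eq_span_natCast (B := ⟨B, hB0⟩) hm hB
  refine ⟨n, C, dvd_disc_of_sq_eq_span_natCast hn hC, hC, ?_⟩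
  have hAB : ClassGroup.mk0 A = (ClassGroup.mk0 ⟨B, hB0⟩)⁻¹ :=
    ClassGroup.mk0_eq_mk0_inv_iff.mpr ⟨y, hy0, hy⟩
  rw [hCB, hc, hAB, inv_inv]

-- Hilbert 90 for ideals: if `J * star J = (n) ^ 2` and `A = J + (n)`, then `J * star A = n * A`,
-- hence `(A * star A) * J = n * A ^ 2`, where `A * star A` is principal.
theorem isSquare_mk0_of_mul_map_star_eq {R : Type*} [CommRing R] [IsDomain R]
    [IsPrincipalIdealRing R] {a b : R} [IsDedekindDomain (QuadraticAlgebra R a b)]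
    {J : (Ideal (QuadraticAlgebra R a b))⁰} {n : R} (hn : n ≠ 0)
    (hJ : (J : Ideal (QuadraticAlgebra R a b)) * (J : Ideal _).map (starRingEnd _) =
      Ideal.span {algebraMap R _ n} ^ 2) : IsSquare (ClassGroup.mk0 J) := by
  let φ := algebraMap R (QuadraticAlgebra R a b)
  have hφ {r : R} : φ r = 0 ↔ r = 0 := map_eq_zero_iff _ algebraMap_injective
  let I : Ideal (QuadraticAlgebra R a b) := J
  let A := I ⊔ Ideal.span {φ n}
  have hI : I ≠ ⊥ := nonZeroDivisors.ne_zero J.2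
  have hA : A ≠ ⊥ := fun h ↦ hI (sup_eq_bot_iff.mp h).1
  have hstar (r : R) : star (φ r) = φ r := star_algebraMap_quadraticAlgebra r
  have hmapA : A.map (starRingEnd _) = I.map (starRingEnd _) ⊔ Ideal.span {φ n} := by
    rw [Ideal.map_sup, Ideal.map_span, Set.image_singleton, starRingEnd_apply, hstar]
  have hconj : I.map (starRingEnd _) * A = Ideal.span {φ n} * A.map (starRingEnd _) := by
    rw [hmapA, Ideal.mul_sup, Ideal.mul_sup, mul_comm _ I, hJ, ← sq, sup_comm, mul_comm]
  obtain ⟨g, hg⟩ := exists_mul_map_star_eq_span_singleton A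
  have hg0 : g ≠ 0 := by
    have hnA : φ n ∈ A := Ideal.mem_sup_right (Ideal.mem_span_singleton_self _)
    have := Ideal.mul_mem_mul hnA (Ideal.mem_map_of_mem (starRingEnd _) hnA)
    rw [hg, starRingEnd_apply, hstar, ← map_mul, Ideal.mem_span_singleton,
      algebraMap_dvd_iff_dvd] at this
    exact ne_zero_of_dvd_ne_zero (mul_ne_zero hn hn) this
  have hkey : Ideal.span {φ g} * I = Ideal.span {φ n} * A ^ 2 := by
    have hn' : Ideal.span {φ n} ≠ ⊥ := by simpa [hφ]
    apply mul_left_cancel₀ hn'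
    calc Ideal.span {φ n} * (Ideal.span {φ g} * I)
        = I * A * (Ideal.span {φ n} * A.map (starRingEnd _)) := by rw [← hg]; ring
      _ = I * I.map (starRingEnd _) * A ^ 2 := by rw [← hconj]; ring
      _ = Ideal.span {φ n} * (Ideal.span {φ n} * A ^ 2) := by rw [hJ]; ring
  refine ⟨ClassGroup.mk0 ⟨A, mem_nonZeroDivisors_of_ne_zero hA⟩, ?_⟩
  rw [← map_mul, ClassGroup.mk0_eq_mk0_iff]
  refine ⟨φ g, φ n, by simpa [hφ], by simpa [hφ], by simpa [sq] using hkey⟩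

end Torsion

section Ramified

open QuadraticAlgebra
open nonZeroDivisors

/-- The square root `2ω - b` of the discriminant `b ^ 2 + 4 * a`, where `ω ^ 2 = a + b * ω`. With a
factor of the discriminant it generates the ideals above the ramified primes. -/
def sqrtDisc {R : Type*} [CommRing R] (a b : R) : QuadraticAlgebra R a b := ⟨-b, 2⟩

theorem sqrtDisc_sq {R : Type*} [CommRing R] (a b : R) :
    sqrtDisc a b ^ 2 = algebraMap R _ (b ^ 2 + 4 * a) := by
  rw [sqrtDisc, sq, mk_mul_mk, algebraMap_eq]
  ext <;> ring

variable {R : Type*} [CommRing R] {a b : R}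

theorem map_star_eq_self_of_sq_eq_span_singleton [IsDedekindDomain (QuadraticAlgebra R a b)]
    {P : Ideal (QuadraticAlgebra R a b)} {r : R} (hP : P ^ 2 = Ideal.span {algebraMap R _ r}) :
    P.map (starRingEnd _) = P := by
  refine pow_left_injective two_ne_zero ?_
  simp only [← Ideal.map_pow, hP, Ideal.map_span, Set.image_singleton, starRingEnd_apply,
    star_algebraMap_quadraticAlgebra]

theorem exists_sq_eq_of_norm_eq_mul_sq [IsDomain R] {p q : R} (hp : Prime p)
    (hD : b ^ 2 + 4 * a = -(p * q)) {x : QuadraticAlgebra R a b} {g : R}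
    (hx : norm x = p * g ^ 2) : ∃ t v : R, (2 * g) ^ 2 = p * t ^ 2 + q * v ^ 2 := by
  have h4 := four_mul_norm_eq x
  rw [hx, hD] at h4
  obtain ⟨t, ht⟩ : p ∣ 2 * x.re + b * x.im :=
    hp.dvd_of_dvd_pow (n := 2) ⟨4 * g ^ 2 - q * x.im ^ 2, by linear_combination -h4⟩
  rw [ht] at h4
  exact ⟨t, x.im, mul_left_cancel₀ hp.ne_zero (by linear_combination h4)⟩

theorem exists_norm_eq_mul_sq_of_sq_eq {p q x y z : R} (hD : b ^ 2 + 4 * a = -(p * q))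
    (h : z ^ 2 = p * x ^ 2 + q * y ^ 2) :
    ∃ β : QuadraticAlgebra R a b, norm β = p * z ^ 2 ∧ algebraMap R _ p ∣ β ^ 2 := by
  -- `β = p * x + y * √D`
  refine ⟨⟨p * x - b * y, 2 * y⟩, ?_, ?_⟩
  · rw [norm_def]
    linear_combination -y ^ 2 * hD - p * h
  · rw [sq, mk_mul_mk, algebraMap_dvd_iff]
    exact ⟨⟨p * x ^ 2 - 2 * b * x * y - q * y ^ 2, by linear_combination y ^ 2 * hD⟩,
      ⟨4 * x * y, by ring⟩⟩

theorem exists_sq_eq_span_algebraMap {m m' : R} (hm : IsCoprime m m')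
    (hD : b ^ 2 + 4 * a = m * m') :
    ∃ P : Ideal (QuadraticAlgebra R a b), P ^ 2 = Ideal.span {algebraMap R _ m} :=
  ⟨_, span_pair_sq_eq_span_singleton (s := sqrtDisc a b) (by rw [sqrtDisc_sq, hD, map_mul])
    (hm.map (algebraMap R (QuadraticAlgebra R a b)))⟩

theorem isSquare_mk0_of_norm_eq [IsDomain R] [IsPrincipalIdealRing R]
    [IsDedekindDomain (QuadraticAlgebra R a b)] {P : (Ideal (QuadraticAlgebra R a b))⁰} {p : R}
    (hp : p ≠ 0)
    (hP : (P : Ideal (QuadraticAlgebra R a b)) ^ 2 = Ideal.span {algebraMap R _ p})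
    {β : QuadraticAlgebra R a b} {z : R} (hz : z ≠ 0) (hβ : norm β = p * z ^ 2)
    (hpβ : algebraMap R _ p ∣ β ^ 2) : IsSquare (ClassGroup.mk0 P) := by
  let φ := algebraMap R (QuadraticAlgebra R a b)
  have hβ0 : β ≠ 0 := by
    rintro rfl
    simp_all
  obtain ⟨J, hJ⟩ : (P : Ideal _) ∣ Ideal.span {β} := by
    refine (UniqueFactorizationMonoid.pow_dvd_pow_iff_dvd two_ne_zero).mp ?_
    rwa [hP, Ideal.span_singleton_pow, Ideal.dvd_span_singleton, Ideal.mem_span_singleton]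
  have hJ0 : J ∈ (Ideal (QuadraticAlgebra R a b))⁰ :=
    mem_nonZeroDivisors_of_ne_zero (by rintro rfl; simp_all)
  have hJJ : J * J.map (starRingEnd _) = Ideal.span {φ z} ^ 2 := by
    have hp0 : Ideal.span {φ p} ≠ ⊥ := by simpa [φ] using hp
    apply mul_left_cancel₀ hp0
    calc Ideal.span {φ p} * (J * J.map (starRingEnd _))
        = Ideal.span {β} * (Ideal.span {β}).map (starRingEnd _) := by
          rw [hJ, Ideal.map_mul, map_star_eq_self_of_sq_eq_span_singleton hP, ← hP]
          ring
      _ = Ideal.span {φ p} * Ideal.span {φ z} ^ 2 := by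
          rw [Ideal.map_span, Set.image_singleton, starRingEnd_apply,
            Ideal.span_singleton_mul_span_singleton, ← algebraMap_norm_eq_mul_star, hβ,
            Ideal.span_singleton_pow, Ideal.span_singleton_mul_span_singleton, map_mul, map_pow]
  have hPJ : ClassGroup.mk0 P = (ClassGroup.mk0 ⟨J, hJ0⟩)⁻¹ :=
    ClassGroup.mk0_eq_mk0_inv_iff.mpr ⟨β, hβ0, hJ.symm⟩
  rw [hPJ]
  exact (isSquare_mk0_of_mul_map_star_eq (J := ⟨J, hJ0⟩) hz hJJ).inv

variable {a b : ℤ} {p q : ℕ}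
variable [IsDedekindDomain (QuadraticAlgebra ℤ a b)] {P : (Ideal (QuadraticAlgebra ℤ a b))⁰}

theorem eq_one_or_eq_mk0_of_sq_eq_one (hp : p.Prime) (hq : q.Prime)
    (hD : b ^ 2 + 4 * a = -(p * q))
    (hP : (P : Ideal (QuadraticAlgebra ℤ a b)) ^ 2 = Ideal.span {algebraMap ℤ _ (p : ℤ)})
    {c : ClassGroup (QuadraticAlgebra ℤ a b)} (hc : c ^ 2 = 1) :
    c = 1 ∨ c = ClassGroup.mk0 P := by
  rw [map_natCast] at hP
  have hpq : (0 : ℤ) < p * q := mod_cast Nat.mul_pos hp.pos hq.pos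
  have hs : Ideal.span {sqrtDisc a b} ^ 2 = Ideal.span {(p * q : QuadraticAlgebra ℤ a b)} := by
    simp [Ideal.span_singleton_pow, sqrtDisc_sq, hD, Ideal.span_singleton_neg]
  have hs0 : sqrtDisc a b ≠ 0 := by
    intro h
    simp [sqrtDisc, QuadraticAlgebra.ext_iff] at h
  have hinj := pow_left_injective (M := Ideal (QuadraticAlgebra ℤ a b)) two_ne_zero
  obtain ⟨m, B, hm, hB, rfl⟩ :=
    exists_dvd_disc_sq_eq_span_natCast_of_sq_eq_one (by linarith) hc
  rw [hD, dvd_neg, ← Nat.cast_mul, Int.natCast_dvd_natCast, Nat.dvd_mul] at hm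
  obtain ⟨m₁, m₂, h₁, h₂, rfl⟩ := hm
  obtain rfl | rfl := (Nat.dvd_prime hp).mp h₁ <;> obtain rfl | rfl := (Nat.dvd_prime hq).mp h₂
  · left
    exact (ClassGroup.mk0_eq_one_iff B.2).mpr ⟨1, by simpa using hB⟩
  · right
    have hBP : (B * P : Ideal (QuadraticAlgebra ℤ a b)) = Ideal.span {sqrtDisc a b} := hinj (by
      simp only [mul_pow, hB, hP, hs, Ideal.span_singleton_mul_span_singleton]
      simp [mul_comm])
    have hPinv : ClassGroup.mk0 P = (ClassGroup.mk0 P)⁻¹ :=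
      ClassGroup.mk0_eq_mk0_inv_iff.mpr ⟨p, by simpa using hp.ne_zero, (sq _).symm.trans hP⟩
    rw [hPinv]
    exact ClassGroup.mk0_eq_mk0_inv_iff.mpr ⟨_, hs0, hBP⟩
  · right
    exact congrArg _ (Subtype.ext (hinj (by simp [hB, hP])))
  · left
    exact (ClassGroup.mk0_eq_one_iff B.2).mpr ⟨sqrtDisc a b, hinj (by simp [hB, hs])⟩

theorem mk0_ne_one_of_sq_eq_span (hp : p.Prime) (hp4 : 4 < p) (hq : q.Prime) (hq2 : q ≠ 2)
    (hD : b ^ 2 + 4 * a = -(p * q))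
    (hP : (P : Ideal (QuadraticAlgebra ℤ a b)) ^ 2 = Ideal.span {algebraMap ℤ _ (p : ℤ)}) :
    ClassGroup.mk0 P ≠ 1 := by
  have hpq : (0 : ℤ) < p * q := mod_cast Nat.mul_pos hp.pos hq.pos
  intro h
  obtain ⟨x, hx⟩ := (ClassGroup.mk0_eq_one_iff P.2).mp h
  rw [Ideal.submodule_span_eq] at hx
  have hnorm : norm x = p * 1 ^ 2 := by
    rw [one_pow, mul_one]
    refine norm_eq_of_associated (by linarith) (Int.natCast_nonneg p)
      (associated_norm_of_span_singleton_mul_map_eq ?_)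
    rw [← hx, map_star_eq_self_of_sq_eq_span_singleton hP, ← sq, hP]
  obtain ⟨t, v, htv⟩ := exists_sq_eq_of_norm_eq_mul_sq (Nat.prime_iff_prime_int.mp hp) hD hnorm
  have ht : t ^ 2 = 0 := by
    by_contra ht
    have : 0 < t ^ 2 := by positivity
    nlinarith [sq_nonneg v]
  have hq4 : q ∣ 2 ^ 2 := by
    rw [← Int.natCast_dvd_natCast]
    exact ⟨v ^ 2, by push_cast; linear_combination htv + p * ht⟩
  exact hq2 ((Nat.prime_dvd_prime_iff_eq hq Nat.prime_two).mp (hq.dvd_of_dvd_pow hq4))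

theorem exists_sq_eq_of_isSquare_mk0 (hp : p.Prime) (hq : 0 < q) (hD : b ^ 2 + 4 * a = -(p * q))
    (hP : (P : Ideal (QuadraticAlgebra ℤ a b)) ^ 2 = Ideal.span {algebraMap ℤ _ (p : ℤ)})
    (hsq : IsSquare (ClassGroup.mk0 P)) :
    ∃ x y z : ℤ, z ≠ 0 ∧ z ^ 2 = p * x ^ 2 + q * y ^ 2 := by
  have hpq : (0 : ℤ) < p * q := mod_cast Nat.mul_pos hp.pos hq
  obtain ⟨c, hc⟩ := hsq
  obtain ⟨A, hA⟩ := ClassGroup.mk0_surjective c⁻¹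
  have hPA : ClassGroup.mk0 P = (ClassGroup.mk0 (A * A))⁻¹ := by
    rw [map_mul, hA, hc, mul_inv, inv_inv]
  obtain ⟨x, hx0, hx⟩ := ClassGroup.mk0_eq_mk0_inv_iff.mp hPA
  obtain ⟨g, hg⟩ := exists_mul_map_star_eq_span_singleton (A : Ideal (QuadraticAlgebra ℤ a b))
  have hnorm : norm x = p * g ^ 2 := by
    refine norm_eq_of_associated (by linarith) (by positivity)
      (associated_norm_of_span_singleton_mul_map_eq ?_)
    calc Ideal.span {x} * (Ideal.span {x}).map (starRingEnd _)
        = (P : Ideal (QuadraticAlgebra ℤ a b)) ^ 2 *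
            (A * (A : Ideal (QuadraticAlgebra ℤ a b)).map (starRingEnd _)) ^ 2 := by
          rw [← hx, Submonoid.coe_mul, Ideal.map_mul, Ideal.map_mul,
            map_star_eq_self_of_sq_eq_span_singleton hP]
          ring
      _ = Ideal.span {algebraMap ℤ (QuadraticAlgebra ℤ a b) (p * g ^ 2)} := by
          rw [hP, hg, Ideal.span_singleton_pow, Ideal.span_singleton_mul_span_singleton,
            map_mul, map_pow]
  obtain ⟨t, v, htv⟩ := exists_sq_eq_of_norm_eq_mul_sq (Nat.prime_iff_prime_int.mp hp) hD hnorm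
  refine ⟨t, v, 2 * g, mul_ne_zero two_ne_zero ?_, htv⟩
  rintro rfl
  have := algebraMap_norm_eq_mul_star x
  simp [hnorm, hx0] at this

theorem isSquare_mk0_iff_exists_sq_eq (hp : p.Prime) (hq : 0 < q)
    (hD : b ^ 2 + 4 * a = -(p * q))
    (hP : (P : Ideal (QuadraticAlgebra ℤ a b)) ^ 2 = Ideal.span {algebraMap ℤ _ (p : ℤ)}) :
    IsSquare (ClassGroup.mk0 P) ↔ ∃ x y z : ℤ, z ≠ 0 ∧ z ^ 2 = p * x ^ 2 + q * y ^ 2 := by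
  refine ⟨exists_sq_eq_of_isSquare_mk0 hp hq hD hP, ?_⟩
  rintro ⟨x, y, z, hz, h⟩
  obtain ⟨β, hβ, hpβ⟩ := exists_norm_eq_mul_sq_of_sq_eq hD h
  exact isSquare_mk0_of_norm_eq (Nat.cast_ne_zero.mpr hp.ne_zero) hP hz hβ hpβ

end Ramified

section ClassNumber

open QuadraticAlgebra
open nonZeroDivisors

theorem four_dvd_card_classGroup_iff {a b : ℤ} [IsDedekindDomain (QuadraticAlgebra ℤ a b)]
    [Finite (ClassGroup (QuadraticAlgebra ℤ a b))] {p q : ℕ} [Fact p.Prime] (hq : q.Prime)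
    (hne : p ≠ q) (hp4 : p % 4 = 1) (hq2 : q ≠ 2) (hD : b ^ 2 + 4 * a = -(p * q)) :
    4 ∣ Nat.card (ClassGroup (QuadraticAlgebra ℤ a b)) ↔ legendreSym p q = 1 := by
  have hp : p.Prime := Fact.out
  have hcop : IsCoprime (p : ℤ) (-q) :=
    (Nat.isCoprime_iff_coprime.mpr ((Nat.coprime_primes hp hq).mpr hne)).neg_right
  obtain ⟨P, hP⟩ := exists_sq_eq_span_algebraMap hcop (hD.trans (by ring))
  have hp0 : algebraMap ℤ (QuadraticAlgebra ℤ a b) p ≠ 0 := by simpa using hp.ne_zero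
  have hP0 : P ∈ (Ideal (QuadraticAlgebra ℤ a b))⁰ := by
    refine mem_nonZeroDivisors_of_ne_zero ?_
    rintro rfl
    exact hp0 (by simpa using hP.symm)
  lift P to (Ideal (QuadraticAlgebra ℤ a b))⁰ using hP0
  have hPP : ClassGroup.mk0 P ^ 2 = 1 := by
    rw [sq, mul_eq_one_iff_eq_inv, ClassGroup.mk0_eq_mk0_inv_iff]
    exact ⟨_, hp0, by rw [← sq, hP]⟩
  rw [four_dvd_card_iff_isSquare
      (mk0_ne_one_of_sq_eq_span hp (by have := hp.two_le; omega) hq hq2 hD hP) hPP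
      (fun _ ↦ eq_one_or_eq_mk0_of_sq_eq_one hp hq hD hP),
    isSquare_mk0_iff_exists_sq_eq hp hq.pos hD hP,
    exists_sq_eq_iff_legendreSym_eq_one hq hne hp4 hq2]

end ClassNumber

section IntegralClosure

open QuadraticAlgebra

variable {R F : Type*} [CommRing R] [IsDomain R] [UniqueFactorizationMonoid R] [Field F]
  [Algebra R F] [IsFractionRing R F]

theorem exists_algebraMap_eq_of_squarefree_mul_sq {d n : R} (hd : Squarefree d) {u : F}
    (h : algebraMap R F d * u ^ 2 = algebraMap R F n) : ∃ t : R, algebraMap R F t = u := by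
  refine IsFractionRing.isInteger_of_isUnit_den (A := R) ?_
  have hnum : d * IsFractionRing.num R u ^ 2 = (IsFractionRing.den R u : R) ^ 2 * n := by
    apply IsFractionRing.injective R F
    have hden : algebraMap R F (IsFractionRing.den R u) ≠ 0 :=
      IsFractionRing.to_map_ne_zero_of_mem_nonZeroDivisors (IsFractionRing.den R u).2
    rw [← IsFractionRing.mk'_num_den' R u] at h
    field_simp at h
    simpa using h
  have hdvd : (IsFractionRing.den R u : R) ∣ IsFractionRing.num R u ^ 2 :=
    hd.dvd_of_squarefree_of_mul_dvd_mul_right ⟨n, by rw [hnum, sq]⟩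
  exact (IsFractionRing.num_den_reduced R u).symm.pow_right.isUnit_of_dvd hdvd

variable {a b : R}

theorem exists_algebraMap_eq_of_isIntegral (hD : Squarefree (b ^ 2 + 4 * a))
    {x : QuadraticAlgebra F (algebraMap R F a) (algebraMap R F b)} (hx : IsIntegral R x) :
    (∃ r : R, algebraMap R F r = x.re) ∧ ∃ t : R, algebraMap R F t = x.im := by
  have hstar : IsIntegral R (star x) :=
    hx.map_of_comp_eq (RingHom.id R) (starRingEnd _) (RingHom.ext fun r ↦
      (star_algebraMap_quadraticAlgebra r).symm)
  have hbase {u : F} (hu : IsIntegral R (algebraMap F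
      (QuadraticAlgebra F (algebraMap R F a) (algebraMap R F b)) u)) :
      ∃ r : R, algebraMap R F r = u :=
    IsIntegrallyClosed.algebraMap_eq_of_integral
      ((isIntegral_algebraMap_iff algebraMap_injective).mp hu)
  obtain ⟨T, hT⟩ := hbase (algebraMap_trace_eq_add_star x ▸ hx.add hstar)
  obtain ⟨N, hN⟩ := hbase (algebraMap_norm_eq_mul_star x ▸ hx.mul hstar)
  rw [trace_def] at hT
  rw [norm_def] at hN
  have hdisc : algebraMap R F (b ^ 2 + 4 * a) * x.im ^ 2 = algebraMap R F (T ^ 2 - 4 * N) := by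
    simp only [map_add, map_sub, map_mul, map_pow, map_ofNat, hT, hN]
    ring
  obtain ⟨t, ht⟩ := exists_algebraMap_eq_of_squarefree_mul_sq hD hdisc
  refine ⟨IsIntegrallyClosed.algebraMap_eq_of_integral
    ⟨.X ^ 2 + .C (b * t) * .X - .C (a * t ^ 2 + N), by monicity!, ?_⟩, t, ht⟩
  simp only [Polynomial.eval₂_add, Polynomial.eval₂_sub, Polynomial.eval₂_mul, Polynomial.eval₂_pow,
    Polynomial.eval₂_X, Polynomial.eval₂_C, map_add, map_mul, map_pow, hN, ht]
  ring

theorem isIntegralClosure_quadraticAlgebra {L : Type*} [Field L] [Algebra R L] [Algebra F L]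
    [IsScalarTower R F L] [Algebra (QuadraticAlgebra R a b) L]
    [IsScalarTower R (QuadraticAlgebra R a b) L] (hL : finrank F L = 2)
    (hab : ∀ r : F, r ^ 2 ≠ algebraMap R F a + algebraMap R F b * r)
    (hD : Squarefree (b ^ 2 + 4 * a)) : IsIntegralClosure (QuadraticAlgebra R a b) R L := by
  have := Fact.mk hab
  let e : QuadraticAlgebra F (algebraMap R F a) (algebraMap R F b) →ₐ[F] L :=
    lift ⟨algebraMap _ L (ω : QuadraticAlgebra R a b), by
      rw [← map_mul, omega_mul_omega_eq_add]
      simp [Algebra.smul_def, ← IsScalarTower.algebraMap_apply]⟩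
  have he (y : QuadraticAlgebra R a b) :
      algebraMap _ L y = e ⟨algebraMap R F y.re, algebraMap R F y.im⟩ := by
    obtain ⟨r, t⟩ := y
    rw [mk_eq_add_smul_omega]
    simp [e, Algebra.smul_def, ← IsScalarTower.algebraMap_apply]
  have hinj : Function.Injective e := e.toRingHom.injective
  have : FiniteDimensional F L := Module.finite_of_finrank_eq_succ hL
  have hsurj : Function.Surjective e :=
    (LinearMap.injective_iff_surjective_of_finrank_eq_finrank (f := e.toLinearMap)
      ((finrank_eq_two _ _).trans hL.symm)).mp hinj
  refine ⟨fun y y' h ↦ ?_, fun {x} ↦ ⟨fun hx ↦ ?_, ?_⟩⟩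
  · rw [he, he] at h
    simpa [QuadraticAlgebra.ext_iff] using hinj h
  · obtain ⟨z, rfl⟩ := hsurj x
    obtain ⟨⟨r, hr⟩, t, ht⟩ := exists_algebraMap_eq_of_isIntegral hD
      ((isIntegral_algHom_iff (e.restrictScalars R) hinj).mp hx)
    exact ⟨⟨r, t⟩, by rw [he, hr, ht]⟩
  · rintro ⟨y, rfl⟩
    exact (Algebra.IsIntegral.isIntegral y).algebraMap

end IntegralClosure

section NumberField

open QuadraticAlgebra

theorem four_dvd_classNumber_iff_legendreSym {a b : ℤ} {p q : ℕ} [Fact p.Prime] (hq : q.Prime)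
    (hne : p ≠ q) (hp4 : p % 4 = 1) (hq2 : q ≠ 2) (hD : b ^ 2 + 4 * a = -(p * q))
    {K : Type*} [Field K] [NumberField K] (hK : finrank ℚ K = 2) {θ : K}
    (hθ : θ * θ = a • 1 + b • θ) : 4 ∣ classNumber K ↔ legendreSym p q = 1 := by
  have hp : p.Prime := Fact.out
  have hsqf : Squarefree (b ^ 2 + 4 * a) := by
    rw [hD, ← Int.squarefree_natAbs, Int.natAbs_neg, ← Nat.cast_mul, Int.natAbs_natCast,
      Nat.squarefree_mul ((Nat.coprime_primes hp hq).mpr hne)]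
    exact ⟨hp.prime.squarefree, hq.prime.squarefree⟩
  have hirr (r : ℚ) : r ^ 2 ≠ algebraMap ℤ ℚ a + algebraMap ℤ ℚ b * r := fun hr ↦ by
    have hdisc : (2 * r - b) ^ 2 = -(p * q) := by
      have : (b ^ 2 + 4 * a : ℚ) = -(p * q) := mod_cast hD
      simp only [algebraMap_int_eq, eq_intCast] at hr
      linear_combination 4 * hr + this
    have : (0 : ℚ) < p * q := mod_cast Nat.mul_pos hp.pos hq.pos
    linarith [sq_nonneg (2 * r - b)]
  let _ : Algebra (QuadraticAlgebra ℤ a b) K := (lift ⟨θ, hθ⟩).toAlgebra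
  have : IsScalarTower ℤ (QuadraticAlgebra ℤ a b) K := .of_algHom _
  have := isIntegralClosure_quadraticAlgebra hK hirr hsqf
  have := (IsIntegralClosure.algebraMap_injective (QuadraticAlgebra ℤ a b) ℤ K).isDomain
  have := IsIntegralClosure.isDedekindDomain ℤ ℚ K (QuadraticAlgebra ℤ a b)
  let e := (ClassGroup.mulEquiv (RingOfIntegers.equiv (K := K) (QuadraticAlgebra ℤ a b))).toEquiv
  have : Finite (ClassGroup (QuadraticAlgebra ℤ a b)) := .of_equiv _ e
  rw [classNumber, ← Nat.card_eq_fintype_card, Nat.card_congr e,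
    four_dvd_card_classGroup_iff hq hne hp4 hq2 hD]

end NumberField

/-- Let q ≡ 3 (mod 4) and p ≡ 1 (mod 4) be primes. Then 4 divides the class
number of Q(√(-qp)) if and only if the Legendre symbol (-q/p) equals 1. -/
theorem four_dvd_classNumber_iff (q p : ℕ) (hq : q.Prime) [Fact p.Prime]
    (hne : p ≠ q) (hq4 : q % 4 = 3) (hp4 : p % 4 = 1)
    (K : Type*) [Field K] [NumberField K]
    (hdim : finrank ℚ K = 2) (hgen : ∃ α : K, α ^ 2 = -(q * p : ℚ)) :
    4 ∣ NumberField.classNumber K ↔ legendreSym p (-(q : ℤ)) = 1 := by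
  obtain ⟨α, hα⟩ := hgen
  obtain ⟨k, hk⟩ : 4 ∣ q * p + 1 := Nat.dvd_of_mod_eq_zero (by simp [Nat.add_mod, Nat.mul_mod, *])
  have hsymm : legendreSym p (-q) = legendreSym p q := by
    have hp2 : p ≠ 2 := by rintro rfl; contradiction
    rw [← neg_one_mul, legendreSym.mul, legendreSym.at_neg_one hp2,
      ZMod.χ₄_nat_one_mod_four hp4, one_mul]
  have hkK : (q * p + 1 : K) = 4 * k := mod_cast congrArg (Nat.cast : ℕ → K) hk
  -- The ring of integers is generated by `(1 + √(-qp)) / 2`.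
  have hθ : (1 + α) / 2 * ((1 + α) / 2) = (-k : ℤ) • (1 : K) + (1 : ℤ) • ((1 + α) / 2) := by
    push_cast at hα
    simp only [neg_smul, natCast_zsmul, nsmul_eq_mul, one_smul, mul_one]
    linear_combination hα / 4 - hkK / 4
  rw [hsymm]
  refine four_dvd_classNumber_iff_legendreSym hq hne hp4 (by rintro rfl; contradiction) ?_ hdim hθ
  zify at hk
  linear_combination hk
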